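/- Let A and A' be oriented finitely generated abelian groups of rank 1, with orientations u_A and u_{A'}. Let ψ : D → A' (with D ⊆ A) be a partial map which is a relative partial dilatation, and suppose (v₁, v₁') and (v₂, v₂') are both defining pairs for ψ. Then u_{A'}(v₁')·u_A(v₂) = u_{A'}(v₂')·u_A(v₁); equivalently, the rational number u_{A'}(v')/u_A(v) is independent of the choice of defining pair (v, v'). In particular the oriented dilatation rate λ(ψ) ∈ ℚ is well defined and nonzero, depending only on ψ and the orientations of A and A'. -/

import Mathlib

/-!
Orientations vanish only on torsion, so the integral combination `u v₂ • v₁ - u v₁ • v₂`, which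
`u` kills, is torsion: some nonzero `c` gives `(c * u v₂) • v₁ = (c * u v₁) • v₂`. This element lies
on both lines `ℤ • v₁` and `ℤ • v₂`, so evaluating `ψ` there in two ways transports the relation to
`v₁'` and `v₂'`; apply `u'` and cancel `c`. Over a commutative ring in place of `ℤ`, the same
argument works with `c` a non-zero-divisor.
-/

open scoped nonZeroDivisors

/-- The partial map `ψ : D → M'` is a dilatation along the line `R • v`, which it sends to the line
`R • v'`. For `R = ℤ` and `v`, `v'` of infinite order, `(v, v')` is a defining pair of `ψ`; the
order conditions are kept separate. -/
structure IsDilatationAlong (R : Type*) {M M' : Type*} [SMul R M] [SMul R M'] {D : Set M}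
    (ψ : D → M') (v : M) (v' : M') : Prop where
  smul_mem : ∀ r : R, r • v ∈ D
  apply_smul : ∀ r : R, ψ ⟨r • v, smul_mem r⟩ = r • v'

theorem IsDilatationAlong.smul_eq_smul {R M M' : Type*} [SMul R M] [SMul R M'] {D : Set M}
    {ψ : D → M'} {v₁ v₂ : M} {v₁' v₂' : M'} (h₁ : IsDilatationAlong R ψ v₁ v₁')
    (h₂ : IsDilatationAlong R ψ v₂ v₂') {r s : R} (h : r • v₁ = s • v₂) :
    r • v₁' = s • v₂' :=
  calc
    r • v₁' = ψ ⟨r • v₁, h₁.smul_mem r⟩ := (h₁.apply_smul r).symm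
    _ = ψ ⟨s • v₂, h₂.smul_mem s⟩ := congrArg ψ (Subtype.ext h)
    _ = s • v₂' := h₂.apply_smul s

section Module

variable {R M M' : Type*} [CommRing R] [AddCommGroup M] [Module R M] [AddCommGroup M'] [Module R M']

theorem notMem_torsion_of_smul_eq_zero_imp [Nontrivial R] {v : M}
    (hv : ∀ r : R, r • v = 0 → r = 0) : v ∉ Submodule.torsion R M :=
  fun ⟨c, hc⟩ => nonZeroDivisors.coe_ne_zero c (hv c hc)

theorem apply_ne_zero_of_notMem_torsion {u : M →ₗ[R] R}
    (hu : LinearMap.ker u ≤ Submodule.torsion R M) {v : M} (hv : v ∉ Submodule.torsion R M) :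
    u v ≠ 0 :=
  fun h => hv (hu h)

theorem exists_mul_apply_smul_eq {u : M →ₗ[R] R}
    (hu : LinearMap.ker u ≤ Submodule.torsion R M) (v w : M) :
    ∃ c ∈ R⁰, (c * u w) • v = (c * u v) • w := by
  have mem_ker : u w • v - u v • w ∈ LinearMap.ker u := by
    simp [mul_comm]
  obtain ⟨⟨c, hc⟩, hcvw⟩ := hu mem_ker
  have : c • (u w • v - u v • w) = 0 := hcvw
  exact ⟨c, hc, by simpa only [smul_sub, smul_smul, sub_eq_zero] using this⟩

theorem IsDilatationAlong.apply_mul_apply_eq {D : Set M} {ψ : D → M'} {v₁ v₂ : M} {v₁' v₂' : M'}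
    (h₁ : IsDilatationAlong R ψ v₁ v₁') (h₂ : IsDilatationAlong R ψ v₂ v₂')
    {u : M →ₗ[R] R} (hu : LinearMap.ker u ≤ Submodule.torsion R M) (u' : M' →ₗ[R] R) :
    u' v₁' * u v₂ = u' v₂' * u v₁ := by
  obtain ⟨c, hc, hcv⟩ := exists_mul_apply_smul_eq hu v₁ v₂
  have image_relation : (c * u v₂) • v₁' = (c * u v₁) • v₂' := h₁.smul_eq_smul h₂ hcv
  refine (mul_cancel_left_mem_nonZeroDivisors hc).1 ?_
  calc
    c * (u' v₁' * u v₂) = u' ((c * u v₂) • v₁') := by rw [map_smul, smul_eq_mul]; ring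
    _ = u' ((c * u v₁) • v₂') := by rw [image_relation]
    _ = c * (u' v₂' * u v₁) := by rw [map_smul, smul_eq_mul]; ring

theorem orientedDilatationRate_well_defined_general
    {u : M →ₗ[R] R} (hu : LinearMap.ker u ≤ Submodule.torsion R M)
    {u' : M' →ₗ[R] R} (hu' : LinearMap.ker u' ≤ Submodule.torsion R M')
    {D : Set M} {ψ : D → M'} {v₁ v₂ : M} {v₁' v₂' : M'}
    (hv₁ : v₁ ∉ Submodule.torsion R M) (hv₁' : v₁' ∉ Submodule.torsion R M')
    (h₁ : IsDilatationAlong R ψ v₁ v₁') (h₂ : IsDilatationAlong R ψ v₂ v₂') :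
    u v₁ ≠ 0 ∧ u' v₁' ≠ 0 ∧ u' v₁' * u v₂ = u' v₂' * u v₁ :=
  ⟨apply_ne_zero_of_notMem_torsion hu hv₁, apply_ne_zero_of_notMem_torsion hu' hv₁',
    h₁.apply_mul_apply_eq h₂ hu u'⟩

end Module

/-- An orientation of a rank-one abelian group, viewed as a `ℤ`-linear functional on the group
itself rather than on its torsion-free quotient. -/
def orientationFunctional {A : Type*} [AddCommGroup A] (u : (A ⧸ AddCommGroup.torsion A) ≃+ ℤ) :
    A →ₗ[ℤ] ℤ :=
  (u.toAddMonoidHom.comp (QuotientAddGroup.mk' (AddCommGroup.torsion A))).toIntLinearMap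

theorem ker_orientationFunctional {A : Type*} [AddCommGroup A]
    (u : (A ⧸ AddCommGroup.torsion A) ≃+ ℤ) :
    LinearMap.ker (orientationFunctional u) = Submodule.torsion ℤ A := by
  ext v
  calc
    v ∈ LinearMap.ker (orientationFunctional u)
        ↔ u (v : A ⧸ AddCommGroup.torsion A) = 0 := Iff.rfl
    _ ↔ (v : A ⧸ AddCommGroup.torsion A) = 0 := map_eq_zero_iff u u.injective
    _ ↔ v ∈ AddCommGroup.torsion A := QuotientAddGroup.eq_zero_iff v
    _ ↔ v ∈ Submodule.torsion ℤ A := by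
      rw [← Submodule.torsion_int, Submodule.mem_toAddSubgroup]

/-- The oriented dilatation rate of a relative partial dilatation
between oriented finitely generated rank-1 abelian groups is well defined: for any
two defining pairs `(v₁, v₁')` and `(v₂, v₂')` of `ψ`, one has
`u_{A'}(v₁')·u_A(v₂) = u_{A'}(v₂')·u_A(v₁)`, and moreover `u_A(v₁) ≠ 0` and
`u_{A'}(v₁') ≠ 0`, so `λ(ψ) = u_{A'}(v')/u_A(v) ∈ ℚ` is well defined and nonzero. -/
theorem orientedDilatationRate_well_defined
    {A A' : Type*} [AddCommGroup A] [AddCommGroup A']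
    [AddGroup.FG A] [AddGroup.FG A']
    (uA : (A ⧸ AddCommGroup.torsion A) ≃+ ℤ)
    (uA' : (A' ⧸ AddCommGroup.torsion A') ≃+ ℤ)
    (D : Set A) (ψ : D → A')
    (v₁ v₂ : A) (v₁' v₂' : A')
    (hv₁ : ∀ n : ℤ, n • v₁ = 0 → n = 0)
    (hv₁' : ∀ n : ℤ, n • v₁' = 0 → n = 0)
    (hv₂ : ∀ n : ℤ, n • v₂ = 0 → n = 0)
    (hv₂' : ∀ n : ℤ, n • v₂' = 0 → n = 0)
    (hD₁ : ∀ m : ℤ, m • v₁ ∈ D)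
    (hψ₁ : ∀ m : ℤ, ψ ⟨m • v₁, hD₁ m⟩ = m • v₁')
    (hD₂ : ∀ m : ℤ, m • v₂ ∈ D)
    (hψ₂ : ∀ m : ℤ, ψ ⟨m • v₂, hD₂ m⟩ = m • v₂') :
    uA ((QuotientAddGroup.mk v₁ : A ⧸ AddCommGroup.torsion A)) ≠ 0 ∧
    uA' ((QuotientAddGroup.mk v₁' : A' ⧸ AddCommGroup.torsion A')) ≠ 0 ∧
    uA' ((QuotientAddGroup.mk v₁' : A' ⧸ AddCommGroup.torsion A')) *
        uA ((QuotientAddGroup.mk v₂ : A ⧸ AddCommGroup.torsion A)) =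
      uA' ((QuotientAddGroup.mk v₂' : A' ⧸ AddCommGroup.torsion A')) *
        uA ((QuotientAddGroup.mk v₁ : A ⧸ AddCommGroup.torsion A)) := by
  exact orientedDilatationRate_well_defined_general
    (ker_orientationFunctional uA).le (ker_orientationFunctional uA').le
    (notMem_torsion_of_smul_eq_zero_imp hv₁) (notMem_torsion_of_smul_eq_zero_imp hv₁')
    ⟨hD₁, hψ₁⟩ ⟨hD₂, hψ₂⟩
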